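/- Suppose the mesh 𝒯 satisfies (M1) and (M4). For T ∈ 𝒯 set δ₁(T) := diam(T)/(2 C_cent) and U_T := {x ∈ ℝ^d : dist(x, T) < δ₁(T)}. Then the covering (U_T)_{T∈𝒯} is locally finite with bound C_patch²: for every x ∈ ℝ^d one has #{T ∈ 𝒯 : x ∈ U_T} ≤ C_patch². -/

import Mathlib

/-!
Among the elements `T` with `x ∈ U_T`, let `T₀` be one of maximal diameter. For any other such `T`,
the triangle inequality through `x` gives points of `T₀` and `T` at distance less than
`δ₁(T₀) + δ₁(T) ≤ 2 δ₁(T₀) = diam(T₀) / C_cent ≤ dist(T₀, Γ ∖ π(T₀))`, so `T` meets `π(T₀)`, and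
hence meets some `T' ∈ Π(T₀)` (`exists_mem_PiFin_of_close`). Thus `T ∈ Π(T')`, and (M1), applied
to `T₀` and then to each `T'`, bounds the number of such `T` by `C_patch²`.
-/

open MeasureTheory Metric Set
open scoped ENNReal NNReal Classical

noncomputable section

/-- `ℝ^d` as a Euclidean space. -/
abbrev Euc (d : ℕ) := EuclideanSpace ℝ (Fin d)

/-- The `(d-1)`-dimensional Hausdorff measure restricted to `Γ`. -/
def surfMeasure (d : ℕ) (Γ : Set (Euc d)) : Measure (Euc d) :=
  (μH[(d : ℝ) - 1]).restrict Γ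

/-- The patch `π^q(ω)` of order `q` of a set `ω` with respect to the mesh `𝒯`. -/
def patchSet {d : ℕ} (𝒯 : Finset (Set (Euc d))) : ℕ → Set (Euc d) → Set (Euc d)
  | 0, ω => ω
  | q + 1, ω => ⋃₀ {T : Set (Euc d) | T ∈ 𝒯 ∧ (T ∩ patchSet 𝒯 q ω).Nonempty}

/-- The collection `Π^q(ω)` of mesh elements contained in the patch `π^q(ω)`. -/
def PiFin {d : ℕ} (𝒯 : Finset (Set (Euc d))) (q : ℕ) (ω : Set (Euc d)) :
    Finset (Set (Euc d)) :=
  𝒯.filter fun T => T ⊆ patchSet 𝒯 q ω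

/-- The local mesh width `h_T := μ(T)^{1/(d-1)}` (as a real number). -/
def hSize (d : ℕ) (Γ : Set (Euc d)) (T : Set (Euc d)) : ℝ :=
  (surfMeasure d Γ T).toReal ^ ((1 : ℝ) / ((d : ℝ) - 1))

/-- Distance between two sets, with the convention `dist(A, ∅) := diam Γ`. -/
def distConv (d : ℕ) (Γ A B : Set (Euc d)) : ℝ :=
  if B = ∅ then Metric.diam Γ else sInf (Set.image2 dist A B)

/-- The squared Sobolev–Slobodeckij seminorm `|v|_{H^σ(ω)}²`, valued in `[0,∞]`. -/
def semiSq (d : ℕ) (σ : ℝ) (μ : Measure (Euc d)) (v : Euc d → ℂ) (ω : Set (Euc d)) : ℝ≥0∞ :=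
  ∫⁻ x in ω, ∫⁻ y in ω,
    ((‖v x - v y‖₊ : ℝ≥0∞)) ^ 2 / edist x y ^ ((d : ℝ) - 1 + 2 * σ) ∂μ ∂μ

/-- The squared seminorm of a `ℂ^D`-valued function: the sum over the components. -/
def semiSqD (d D : ℕ) (σ : ℝ) (μ : Measure (Euc d)) (v : Euc d → Fin D → ℂ)
    (ω : Set (Euc d)) : ℝ≥0∞ :=
  ∑ j : Fin D, semiSq d σ μ (fun x => v x j) ω

/-- A mesh of `Γ`: a finite collection of compact subsets of `Γ` of positive measure,
covering `Γ`, with pairwise intersections of measure zero. -/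
def IsMesh {d : ℕ} (μ : Measure (Euc d)) (Γ : Set (Euc d)) (𝒯 : Finset (Set (Euc d))) : Prop :=
  (∀ T ∈ 𝒯, IsCompact T ∧ T ⊆ Γ ∧ 0 < μ T) ∧ Γ = ⋃₀ ↑𝒯 ∧
    (∀ T ∈ 𝒯, ∀ T' ∈ 𝒯, T ≠ T' → μ (T ∩ T') = 0)

theorem mem_PiFin_one {d : ℕ} {𝒯 : Finset (Set (Euc d))} {T ω : Set (Euc d)} (hT : T ∈ 𝒯)
    (h : (T ∩ ω).Nonempty) : T ∈ PiFin 𝒯 1 ω :=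
  Finset.mem_filter.2 ⟨hT, Set.subset_sUnion_of_mem ⟨hT, h⟩⟩

/-- If `T` has a point nearer to some point of `A` than `dist(A, Γ ∖ π(A))`, then that point lies in
`π(A)`, so `T` belongs to the patch of some element of the patch of `A`. -/
theorem exists_mem_PiFin_of_close {d : ℕ} {Γ : Set (Euc d)} {𝒯 : Finset (Set (Euc d))}
    {A T : Set (Euc d)} (hT : T ∈ 𝒯) (hTΓ : T ⊆ Γ) {a t : Euc d} (ha : a ∈ A) (ht : t ∈ T)
    (h : dist a t < distConv d Γ A (Γ \ patchSet 𝒯 1 A)) :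
    ∃ T' ∈ PiFin 𝒯 1 A, T ∈ PiFin 𝒯 1 T' := by
  have htp : t ∈ patchSet 𝒯 1 A := by
    by_contra hn
    have hmem : t ∈ Γ \ patchSet 𝒯 1 A := ⟨hTΓ ht, hn⟩
    rw [distConv, if_neg (Set.nonempty_iff_ne_empty.1 ⟨t, hmem⟩)] at h
    refine absurd (csInf_le ⟨0, ?_⟩ (Set.mem_image2_of_mem ha hmem)) (not_le.2 h)
    rintro _ ⟨u, _, v, _, rfl⟩
    exact dist_nonneg
  obtain ⟨T', ⟨hT', hne⟩, htT'⟩ := htp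
  exact ⟨T', mem_PiFin_one hT' hne, mem_PiFin_one hT ⟨t, ht, htT'⟩⟩

/-- local finiteness of the covering `(U_T)_{T∈𝒯}`. Under (M1) and (M4),
with `δ₁(T) := diam(T)/(2 C_cent)` and `U_T := {x : dist(x,T) < δ₁(T)}`, every point of `ℝ^d`
belongs to at most `C_patch²` of the sets `U_T`. -/
theorem stmt_14 (d : ℕ) (hd : 2 ≤ d)
    (Γ : Set (Euc d)) (hΓc : IsCompact Γ)
    (hΓpos : 0 < (μH[(d : ℝ) - 1] : Measure (Euc d)) Γ)
    (hΓfin : (μH[(d : ℝ) - 1] : Measure (Euc d)) Γ < ⊤)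
    (𝒯 : Finset (Set (Euc d))) (hmesh : IsMesh (surfMeasure d Γ) Γ 𝒯)
    (Cpatch : ℕ) (Ccent : ℝ) (hCcent : 0 < Ccent)
    -- (M1) bounded element patch
    (hM1 : ∀ T ∈ 𝒯, (PiFin 𝒯 1 T).card ≤ Cpatch)
    -- (M4) elements lie in the center of their patches
    (hM4 : ∀ T ∈ 𝒯, Metric.diam T ≤ Ccent * distConv d Γ T (Γ \ patchSet 𝒯 1 T)) :
    ∀ x : Euc d,
      (𝒯.filter fun T => Metric.infDist x T < Metric.diam T / (2 * Ccent)).card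
        ≤ Cpatch ^ 2 := by
  intro x
  set S := 𝒯.filter fun T => Metric.infDist x T < Metric.diam T / (2 * Ccent) with hS
  obtain hE | hne := S.eq_empty_or_nonempty
  · simp [hE]
  obtain ⟨A, hAS, hmax⟩ := S.exists_max_image (fun T => Metric.diam T) hne
  have hnonempty : ∀ T ∈ 𝒯, T.Nonempty := fun T hT =>
    nonempty_of_measure_ne_zero (hmesh.1 T hT).2.2.ne'
  obtain ⟨hA, hAx⟩ := Finset.mem_filter.1 hAS
  obtain ⟨a, ha, hxa⟩ := (Metric.infDist_lt_iff (hnonempty A hA)).1 hAx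
  have hsub : S ⊆ (PiFin 𝒯 1 A).biUnion fun T' => PiFin 𝒯 1 T' := by
    intro T hTS
    obtain ⟨hT, hTx⟩ := Finset.mem_filter.1 hTS
    obtain ⟨t, ht, hxt⟩ := (Metric.infDist_lt_iff (hnonempty T hT)).1 hTx
    have hle : Metric.diam T / (2 * Ccent) ≤ Metric.diam A / (2 * Ccent) :=
      div_le_div_of_nonneg_right (hmax T hTS) (by positivity)
    have hsum : Metric.diam A / (2 * Ccent) + Metric.diam A / (2 * Ccent)
        = Metric.diam A / Ccent := by
      field_simp
      ring
    have hcent : Metric.diam A / Ccent ≤ distConv d Γ A (Γ \ patchSet 𝒯 1 A) :=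
      (div_le_iff₀' hCcent).2 (hM4 A hA)
    have htri := dist_triangle_left a t x
    exact Finset.mem_biUnion.2
      (exists_mem_PiFin_of_close hT (hmesh.1 T hT).2.1 ha ht (by linarith))
  calc S.card ≤ _ := Finset.card_le_card hsub
    _ ≤ (PiFin 𝒯 1 A).card * Cpatch :=
      Finset.card_biUnion_le_card_mul _ _ _ fun T' hT' => hM1 T' (Finset.mem_filter.1 hT').1
    _ ≤ Cpatch * Cpatch := Nat.mul_le_mul_right _ (hM1 A hA)
    _ = Cpatch ^ 2 := (sq _).symm
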